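/- For every integer N ≥ 0, as λ → +∞ through real values, ∫_0^{+∞} e^{−λ(x − log(1+x))} dx = Σ_{n=0}^{N−1} Γ((n+1)/2) c_n λ^{−(n+1)/2} + O(λ^{−(N+1)/2}). -/

import Mathlib

open Finset MeasureTheory Real Asymptotics Filter

/-- Partial ordinary Bell polynomials: `obell f n k` is the coefficient of `x^n` in
`(∑_{m ≥ 1} f m * x^m)^k`, i.e. `B_{n,k}(f₁, …, f_{n-k+1})`. -/
noncomputable def obell (f : ℕ → ℝ) (n k : ℕ) : ℝ :=
  PowerSeries.coeff n ((PowerSeries.mk fun m => if m = 0 then 0 else f m) ^ k)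

/-- The coefficients of the asymptotic expansion of `∫_0^∞ e^{-λ(x - log(1+x))} dx`:
`c_n = (1/(2Γ((n+1)/2))) ∑_{k=0}^n ((-1)^k 2^{(n+1)/2+k}/k!) Γ((n+1)/2+k)
B_{n,k}(a₁,…,a_{n-k+1})` with `a_m = (-1)^m/(m+2)`. -/
noncomputable def laplaceCoeff (n : ℕ) : ℝ :=
  (1 / (2 * Real.Gamma (((n : ℝ) + 1) / 2))) *
    ∑ k ∈ Finset.range (n + 1),
      ((-1 : ℝ) ^ k * (2 : ℝ) ^ (((n : ℝ) + 1) / 2 + k) / (Nat.factorial k : ℝ)) *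
        Real.Gamma (((n : ℝ) + 1) / 2 + k) *
        obell (fun m => (-1 : ℝ) ^ m / ((m : ℝ) + 2)) n k

/-! The scale `t = l x^α` turns `exp (-l φ(x))`, for a phase `φ(x) = x^α (a_0 + s(x))`, into
`exp (-a_0 t) exp (-t s(x))`. Since `s` vanishes to first order, expanding `exp (-t s(x))` in powers
of `x` costs only an error `O(x^N exp (b t))`, uniformly in `t ≥ 0`, for every `b > 0`: all powers
of `t` are absorbed by the exponential. For `b = a_0 / 2` a decaying factor survives, so the error
integrates to `O(l^(-(N+1)/α))`. Away from `0` the same bound controls the expansion because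
`x^n = O(x^N)` there, and `exp (-l φ)` is exponentially small. Integrating the expansion term by
term gives Gamma functions. The theorem is the case `φ(x) = x - log (1 + x)`, `α = 2`. -/

open scoped Topology PowerSeries

lemma eval_trunc_eq_sum_range {R : Type*} [Semiring R] (x : R) (N : ℕ) (p : R⟦X⟧) :
    (p.trunc N).eval x = ∑ n ∈ range N, PowerSeries.coeff n p * x ^ n :=
  PowerSeries.eval₂_trunc_eq_sum_range x (RingHom.id R) N p

section AsymptoticSeries

variable {𝕜 : Type*} [NormedField 𝕜] {l : Filter 𝕜} {F G : 𝕜 → 𝕜} {p q : 𝕜⟦X⟧}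

/-- `p` is an asymptotic power series of `F` along `l`: the error of each truncation of `p` has the
order of the first omitted power. The filter is meant to lie below `𝓝 0`, typically `𝓝[>] 0`. -/
def HasAsymptoticSeries (F : 𝕜 → 𝕜) (p : 𝕜⟦X⟧) (l : Filter 𝕜) : Prop :=
  ∀ N : ℕ, (fun x => F x - (p.trunc N).eval x) =O[l] fun x => x ^ N

lemma isBigO_one_polynomial_eval (f : Polynomial 𝕜) {x₀ : 𝕜} (hl : l ≤ 𝓝 x₀) :
    (fun x => f.eval x) =O[l] fun _ => (1 : 𝕜) :=
  (f.continuous.continuousAt.mono_left hl).isBigO_one 𝕜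

namespace HasAsymptoticSeries

lemma isBigO_one (hF : HasAsymptoticSeries F p l) : F =O[l] fun _ => (1 : 𝕜) := by
  simpa using hF 0

lemma isBigO_id (hF : HasAsymptoticSeries F p l) (hp : PowerSeries.constantCoeff p = 0) :
    F =O[l] fun x => x := by
  simpa [hp] using hF 1

protected lemma const (l : Filter 𝕜) (c : 𝕜) :
    HasAsymptoticSeries (fun _ => c) (PowerSeries.C c) l
  | 0 => by simpa using isBigO_const_one 𝕜 c l
  | N + 1 => by simpa [PowerSeries.trunc_C] using isBigO_zero _ _

protected lemma sub (hF : HasAsymptoticSeries F p l) (hG : HasAsymptoticSeries G q l) :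
    HasAsymptoticSeries (fun x => F x - G x) (p - q) l := fun N => by
  simpa only [PowerSeries.trunc_sub, Polynomial.eval_sub, sub_sub_sub_comm]
    using (hF N).sub (hG N)

protected lemma mul (hl : l ≤ 𝓝 0) (hF : HasAsymptoticSeries F p l)
    (hG : HasAsymptoticSeries G q l) :
    HasAsymptoticSeries (fun x => F x * G x) (p * q) l := by
  intro N
  set P := p.trunc N
  set Q := q.trunc N
  have hPQ : (fun x => (P * Q - (p * q).trunc N).eval x) =O[l] fun x => x ^ N := by
    obtain ⟨R, hR⟩ : Polynomial.X ^ N ∣ P * Q - (p * q).trunc N := by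
      rw [Polynomial.X_pow_dvd_iff]
      intro d hd
      rw [Polynomial.coeff_sub, PowerSeries.coeff_trunc, if_pos hd,
        PowerSeries.coeff_mul_eq_coeff_trunc_mul_trunc _ _ hd, sub_eq_zero]
      simp [P, Q, ← Polynomial.coeff_coe]
    simpa [hR] using (isBigO_refl (fun x : 𝕜 => x ^ N) l).mul (isBigO_one_polynomial_eval R hl)
  have hFP : (fun x => (F x - P.eval x) * G x) =O[l] fun x => x ^ N := by
    simpa using (hF N).mul hG.isBigO_one
  have hGQ : (fun x => P.eval x * (G x - Q.eval x)) =O[l] fun x => x ^ N := by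
    simpa using (isBigO_one_polynomial_eval P hl).mul (hG N)
  refine ((hFP.add hGQ).add hPQ).congr_left fun x => ?_
  simp only [Polynomial.eval_sub, Polynomial.eval_mul]
  ring

protected lemma pow (hl : l ≤ 𝓝 0) (hF : HasAsymptoticSeries F p l) (k : ℕ) :
    HasAsymptoticSeries (fun x => F x ^ k) (p ^ k) l := by
  induction k with
  | zero => simpa using HasAsymptoticSeries.const l (1 : 𝕜)
  | succ k ih => simpa only [pow_succ] using ih.mul hl hF

end HasAsymptoticSeries

end AsymptoticSeries

section BellPolynomials

variable (a : ℕ → ℝ)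

/-- The power series `∑_{m ≥ 1} a_m X^m` whose powers generate the Bell polynomials of `a`. -/
noncomputable def obellSeries : ℝ⟦X⟧ :=
  PowerSeries.mk fun m => if m = 0 then 0 else a m

lemma constantCoeff_obellSeries : PowerSeries.constantCoeff (obellSeries a) = 0 := by
  simp [obellSeries]

lemma mk_sub_C_eq_obellSeries :
    PowerSeries.mk a - PowerSeries.C (a 0) = obellSeries a := by
  ext n
  rcases eq_or_ne n 0 with rfl | hn <;> simp [obellSeries, PowerSeries.coeff_C, *]

lemma obell_eq_zero_of_lt {n k : ℕ} (h : n < k) : obell a n k = 0 :=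
  PowerSeries.X_pow_dvd_iff.1
    (pow_dvd_pow_of_dvd (PowerSeries.X_dvd_iff.2 (constantCoeff_obellSeries a)) k) n h

/-- The coefficient of `x^n` in `exp (-t ∑_{m ≥ 1} a_m x^m)`, a polynomial in `t`. -/
noncomputable def expNegCoeff (n : ℕ) (t : ℝ) : ℝ :=
  ∑ k ∈ range (n + 1), (-t) ^ k / k.factorial * obell a n k

lemma sum_expNegCoeff_mul_pow (N : ℕ) (t x : ℝ) :
    ∑ n ∈ range N, expNegCoeff a n t * x ^ n =
      ∑ k ∈ range N, (-t) ^ k / k.factorial * ((obellSeries a ^ k).trunc N).eval x := by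
  have extend : ∀ n ∈ range N, expNegCoeff a n t =
      ∑ k ∈ range N, (-t) ^ k / k.factorial * obell a n k := fun n hn =>
    sum_subset (range_mono (mem_range.1 hn)) fun k _ hk => by
      rw [obell_eq_zero_of_lt a (by simpa using hk), mul_zero]
  have trunc_eval (k : ℕ) : ((obellSeries a ^ k).trunc N).eval x =
      ∑ n ∈ range N, obell a n k * x ^ n :=
    eval_trunc_eq_sum_range x N _
  rw [sum_congr rfl fun n hn => by rw [extend n hn, sum_mul], sum_comm]
  simp only [trunc_eval, mul_sum, mul_assoc]

end BellPolynomials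

section ExponentialExpansion

variable {a : ℕ → ℝ} {b : ℝ}

lemma abs_exp_sub_sum_le (u : ℝ) (N : ℕ) :
    |exp u - ∑ k ∈ range N, u ^ k / k.factorial| ≤ |u| ^ N * exp |u| := by
  rw [← norm_eq_abs, ← norm_eq_abs, ← Complex.norm_real, ← Complex.norm_real]
  push_cast
  exact Complex.norm_exp_sub_sum_le_norm_mul_exp u N

lemma isBigO_pow_exp_mul (hb : 0 < b) (k : ℕ) :
    (fun t : ℝ => t ^ k) =O[𝓟 (Set.Ici 0)] fun t => exp (b * t) := by
  refine IsBigO.of_bound (k.factorial / b ^ k) (eventually_principal.2 fun t ht => ?_)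
  have ht : 0 ≤ t := ht
  have factorial_bound := pow_div_factorial_le_exp (b * t) (by positivity) k
  rw [norm_of_nonneg (by positivity), norm_of_nonneg (by positivity), div_mul_eq_mul_div,
    le_div_iff₀ (by positivity), mul_comm, ← mul_pow]
  rwa [div_le_iff₀' (by positivity)] at factorial_bound

lemma isBigO_pow_pow_of_le {δ : ℝ} (hδ : 0 < δ) {n N : ℕ} (hn : n ≤ N) :
    (fun x : ℝ => x ^ n) =O[𝓟 (Set.Ici δ)] fun x => x ^ N := by
  refine IsBigO.of_bound (δ ^ (N - n))⁻¹ (eventually_principal.2 fun x hx => ?_)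
  have hx : δ ≤ x := hx
  have hx0 : 0 < x := hδ.trans_le hx
  rw [norm_of_nonneg (by positivity), norm_of_nonneg (by positivity), inv_mul_eq_div,
    le_div_iff₀ (by positivity), ← pow_mul_pow_sub x hn]
  gcongr

lemma isBigO_expNegCoeff (a : ℕ → ℝ) (hb : 0 < b) (n : ℕ) :
    expNegCoeff a n =O[𝓟 (Set.Ici 0)] fun t => exp (b * t) := by
  refine IsBigO.fun_sum fun k _ => ?_
  refine ((isBigO_pow_exp_mul hb k).const_mul_left
    ((-1) ^ k / k.factorial * obell a n k)).congr_left fun t => ?_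
  rw [neg_pow t]
  ring

lemma isBigO_sum_expNegCoeff (a : ℕ → ℝ) (hb : 0 < b) {δ : ℝ} (hδ : 0 < δ) (N : ℕ) :
    (fun z : ℝ × ℝ => ∑ n ∈ range N, expNegCoeff a n z.2 * z.1 ^ n)
      =O[𝓟 (Set.Ici δ) ×ˢ 𝓟 (Set.Ici 0)] fun z => exp (b * z.2) * z.1 ^ N :=
  IsBigO.fun_sum fun n hn =>
    ((isBigO_expNegCoeff a hb n).comp_tendsto tendsto_snd).mul
      ((isBigO_pow_pow_of_le hδ (mem_range.1 hn).le).comp_tendsto tendsto_fst)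

variable {s : ℝ → ℝ} {l : Filter ℝ}

lemma isBigO_exp_neg_mul_sub_taylor (hl : l ≤ 𝓝 0) (hs : s =O[l] fun x => x)
    (hb : 0 < b) (N : ℕ) :
    (fun z : ℝ × ℝ => exp (-z.2 * s z.1) -
        ∑ k ∈ range N, (-z.2) ^ k / k.factorial * s z.1 ^ k)
      =O[l ×ˢ 𝓟 (Set.Ici 0)] fun z => exp (b * z.2) * z.1 ^ N := by
  have s_small : ∀ᶠ x in l, |s x| ≤ b / 2 := by
    have s_tendsto : Tendsto s l (𝓝 0) := hs.trans_tendsto hl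
    simpa using s_tendsto.abs.eventually_le_const (by simpa using half_pos hb)
  have remainder : (fun z : ℝ × ℝ => exp (-z.2 * s z.1) -
        ∑ k ∈ range N, (-z.2) ^ k / k.factorial * s z.1 ^ k)
      =O[l ×ˢ 𝓟 (Set.Ici 0)] fun z => (z.2 ^ N * s z.1 ^ N) * exp (b / 2 * z.2) := by
    refine IsBigO.of_bound 1 (eventually_prod_principal_iff.2 ?_)
    filter_upwards [s_small] with x hx t (ht : 0 ≤ t)
    have abs_arg : |-t * s x| = t * |s x| := by rw [abs_mul, abs_neg, abs_of_nonneg ht]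
    calc ‖exp (-t * s x) - ∑ k ∈ range N, (-t) ^ k / k.factorial * s x ^ k‖
        = |exp (-t * s x) - ∑ k ∈ range N, (-t * s x) ^ k / k.factorial| := by
          simp only [norm_eq_abs, mul_pow, mul_div_right_comm]
      _ ≤ |-t * s x| ^ N * exp |-t * s x| := abs_exp_sub_sum_le _ N
      _ ≤ (t * |s x|) ^ N * exp (b / 2 * t) := by
          rw [abs_arg, mul_comm (b / 2)]
          gcongr
      _ = 1 * ‖t ^ N * s x ^ N * exp (b / 2 * t)‖ := by
          simp [mul_pow, abs_of_nonneg ht]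
  refine remainder.trans ?_
  have absorbed := ((((isBigO_pow_exp_mul (half_pos hb) N).comp_tendsto tendsto_snd).mul
    ((hs.pow N).comp_tendsto tendsto_fst)).mul
      (isBigO_refl (fun z : ℝ × ℝ => exp (b / 2 * z.2)) (l ×ˢ 𝓟 (Set.Ici 0))))
  refine absorbed.congr_right fun z => ?_
  simp only [Function.comp_apply]
  rw [mul_right_comm, ← exp_add]
  ring_nf

lemma isBigO_exp_neg_mul_sub_sum_expNegCoeff (hl : l ≤ 𝓝 0)
    (hs : HasAsymptoticSeries s (obellSeries a) l) (hb : 0 < b) (N : ℕ) :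
    (fun z : ℝ × ℝ => exp (-z.2 * s z.1) - ∑ n ∈ range N, expNegCoeff a n z.2 * z.1 ^ n)
      =O[l ×ˢ 𝓟 (Set.Ici 0)] fun z => exp (b * z.2) * z.1 ^ N := by
  have taylor := isBigO_exp_neg_mul_sub_taylor hl
    (hs.isBigO_id (constantCoeff_obellSeries a)) hb N
  have powers : (fun z : ℝ × ℝ => ∑ k ∈ range N, z.2 ^ k *
        (s z.1 ^ k - ((obellSeries a ^ k).trunc N).eval z.1) * ((-1) ^ k / k.factorial))
      =O[l ×ˢ 𝓟 (Set.Ici 0)] fun z => exp (b * z.2) * z.1 ^ N :=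
    IsBigO.fun_sum fun k _ => (IsBigO.const_mul_left
      (((isBigO_pow_exp_mul hb k).comp_tendsto tendsto_snd).mul
        ((hs.pow hl k N).comp_tendsto tendsto_fst)) _).congr_left fun z => mul_comm _ _
  refine (taylor.add powers).congr_left fun z => ?_
  rw [sum_expNegCoeff_mul_pow, sub_add, ← sum_sub_distrib]
  congr 1
  refine sum_congr rfl fun k _ => ?_
  rw [neg_pow z.2]
  ring

end ExponentialExpansion

section LaplaceMethod

variable {φ : ℝ → ℝ} {a : ℕ → ℝ} {α : ℝ}

section PowerExpIntegrals

variable {b l : ℝ}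

lemma pow_mul_pow_mul_exp_eq (α b l : ℝ) (n k : ℕ) {x : ℝ} (hx : 0 < x) :
    x ^ n * ((l * x ^ α) ^ k * exp (-b * (l * x ^ α))) =
      l ^ k * (x ^ (n + α * k) * exp (-(b * l) * x ^ α)) := by
  rw [rpow_add hx, rpow_natCast, rpow_mul hx.le, rpow_natCast]
  ring_nf

lemma integrableOn_pow_mul_pow_mul_exp (hα : 0 < α) (hb : 0 < b) (hl : 0 < l) (n k : ℕ) :
    IntegrableOn (fun x => x ^ n * ((l * x ^ α) ^ k * exp (-b * (l * x ^ α)))) (Set.Ioi 0) := by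
  have exponent : -1 < n + α * k := neg_one_lt_zero.trans_le (by positivity)
  refine IntegrableOn.congr_fun ?_
    (fun x hx => (pow_mul_pow_mul_exp_eq α b l n k hx).symm) measurableSet_Ioi
  exact (integrableOn_rpow_mul_exp_neg_mul_rpow exponent hα (mul_pos hb hl)).const_mul _

lemma integral_pow_mul_pow_mul_exp (hα : 0 < α) (hb : 0 < b) (hl : 0 < l) (n k : ℕ) :
    ∫ x in Set.Ioi 0, x ^ n * ((l * x ^ α) ^ k * exp (-b * (l * x ^ α))) =
      1 / α * b ^ (-((n + 1) / α + k)) * Gamma ((n + 1) / α + k) * l ^ (-((n + 1) / α)) := by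
  have exponent : -1 < n + α * k := neg_one_lt_zero.trans_le (by positivity)
  have shift : (n + α * k + 1) / α = (n + 1) / α + k := by field_simp; ring
  have cancel : l ^ k * l ^ (-((n + 1) / α + k)) = l ^ (-((n + 1) / α)) := by
    rw [← rpow_natCast, ← rpow_add hl]
    ring_nf
  rw [setIntegral_congr_fun measurableSet_Ioi fun x hx => pow_mul_pow_mul_exp_eq α b l n k hx,
    integral_const_mul, integral_rpow_mul_exp_neg_mul_rpow hα exponent (mul_pos hb hl), neg_div,
    shift, mul_rpow hb.le hl.le, ← cancel]
  ring

end PowerExpIntegrals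

/-- The `N`-th order approximation of `exp (-l φ(x))` for a phase `φ(x) = x^α ∑ a_m x^m`: the
leading term `a_0 l x^α` stays in the exponent, and the exponential of the rest is expanded. -/
noncomputable def laplaceModel (α : ℝ) (a : ℕ → ℝ) (N : ℕ) (l x : ℝ) : ℝ :=
  exp (-a 0 * (l * x ^ α)) * ∑ n ∈ range N, expNegCoeff a n (l * x ^ α) * x ^ n

/-- The coefficient of `l^(-(n+1)/α)` in the expansion of `∫_0^∞ exp (-l φ(x)) dx` for a phase
`φ(x) = x^α ∑ a_m x^m`. -/
noncomputable def laplaceMethodCoeff (α : ℝ) (a : ℕ → ℝ) (n : ℕ) : ℝ :=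
  1 / α * ∑ k ∈ range (n + 1), (-1) ^ k / k.factorial * a 0 ^ (-((n + 1) / α + k)) *
    Gamma ((n + 1) / α + k) * obell a n k

lemma laplaceModel_eq_sum (α : ℝ) (a : ℕ → ℝ) (N : ℕ) (l x : ℝ) :
    laplaceModel α a N l x = ∑ n ∈ range N, ∑ k ∈ range (n + 1),
      (-1) ^ k / k.factorial * obell a n k *
        (x ^ n * ((l * x ^ α) ^ k * exp (-a 0 * (l * x ^ α)))) := by
  simp only [laplaceModel, expNegCoeff, mul_sum, sum_mul]
  refine sum_congr rfl fun n _ => sum_congr rfl fun k _ => ?_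
  rw [neg_pow (l * x ^ α)]
  ring

lemma integrableOn_laplaceModel (hα : 0 < α) (ha : 0 < a 0) (N : ℕ) {l : ℝ} (hl : 0 < l) :
    IntegrableOn (laplaceModel α a N l) (Set.Ioi 0) := by
  simp only [funext (laplaceModel_eq_sum α a N l)]
  exact integrable_finsetSum _ fun n _ => integrable_finsetSum _ fun k _ =>
    (integrableOn_pow_mul_pow_mul_exp hα ha hl n k).const_mul _

lemma integral_laplaceModel (hα : 0 < α) (ha : 0 < a 0) (N : ℕ) {l : ℝ} (hl : 0 < l) :
    ∫ x in Set.Ioi 0, laplaceModel α a N l x =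
      ∑ n ∈ range N, laplaceMethodCoeff α a n * l ^ (-((n + 1) / α)) := by
  have integrable (n k : ℕ) := (integrableOn_pow_mul_pow_mul_exp hα ha hl n k).const_mul
    ((-1) ^ k / k.factorial * obell a n k)
  simp only [laplaceModel_eq_sum]
  rw [integral_finsetSum _ fun n _ => integrable_finsetSum _ fun k _ => integrable n k]
  refine sum_congr rfl fun n _ => ?_
  rw [integral_finsetSum _ fun k _ => integrable n k, laplaceMethodCoeff, mul_sum, sum_mul]
  refine sum_congr rfl fun k _ => ?_
  rw [integral_const_mul, integral_pow_mul_pow_mul_exp hα ha hl]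
  ring

lemma abs_exp_neg_mul_mul_le {c t C x y : ℝ} {N : ℕ} (hx : 0 ≤ x)
    (h : ‖y‖ ≤ C * ‖exp (c / 2 * t) * x ^ N‖) :
    |exp (-c * t) * y| ≤ C * (x ^ N * exp (-(c / 2) * t)) := by
  rw [norm_eq_abs, norm_of_nonneg (by positivity)] at h
  have exponents : exp (-(c / 2) * t) = exp (-c * t) * exp (c / 2 * t) := by
    rw [← exp_add]
    ring_nf
  calc |exp (-c * t) * y| = exp (-c * t) * |y| := by rw [abs_mul, abs_exp]
    _ ≤ exp (-c * t) * (C * (exp (c / 2 * t) * x ^ N)) := by gcongr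
    _ = C * (x ^ N * exp (-(c / 2) * t)) := by rw [exponents]; ring

lemma exists_abs_sub_laplaceModel_le_near_zero (ha : 0 < a 0)
    (hφ : HasAsymptoticSeries (fun x => φ x / x ^ α) (PowerSeries.mk a) (𝓝[>] 0)) (N : ℕ) :
    ∃ C δ : ℝ, 0 ≤ C ∧ 0 < δ ∧ ∀ x ∈ Set.Ioo 0 δ, ∀ l : ℝ, 0 ≤ l →
      |exp (-l * φ x) - laplaceModel α a N l x| ≤
        C * (x ^ N * exp (-(a 0 / 2) * (l * x ^ α))) := by
  have hs : HasAsymptoticSeries (fun x => φ x / x ^ α - a 0) (obellSeries a) (𝓝[>] 0) := by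
    simpa only [mk_sub_C_eq_obellSeries] using hφ.sub (.const _ (a 0))
  obtain ⟨C, hC, hbound⟩ := (isBigO_exp_neg_mul_sub_sum_expNegCoeff nhdsWithin_le_nhds hs
    (half_pos ha) N).exists_nonneg
  obtain ⟨δ, hδ, hbound⟩ := mem_nhdsGT_iff_exists_Ioo_subset.1
    (eventually_prod_principal_iff.1 hbound.bound)
  refine ⟨C, δ, hC, hδ, fun x hx l hl => ?_⟩
  have hx0 : 0 < x := hx.1
  have hxα : x ^ α ≠ 0 := (rpow_pos_of_pos hx0 α).ne'
  set t := l * x ^ α with ht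
  have phase : l * φ x = t * (φ x / x ^ α) := by rw [ht, mul_assoc, mul_div_cancel₀ _ hxα]
  have factor : exp (-l * φ x) = exp (-a 0 * t) * exp (-t * (φ x / x ^ α - a 0)) := by
    rw [← exp_add]
    congr 1
    linear_combination -phase
  rw [laplaceModel, ← ht, factor, ← mul_sub]
  exact abs_exp_neg_mul_mul_le hx0.le (hbound hx t (by positivity : 0 ≤ t))

lemma exists_abs_laplaceModel_le (α : ℝ) (ha : 0 < a 0) {δ : ℝ} (hδ : 0 < δ) (N : ℕ) :
    ∃ C : ℝ, 0 ≤ C ∧ ∀ x : ℝ, δ ≤ x → ∀ l : ℝ, 0 ≤ l →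
      |laplaceModel α a N l x| ≤ C * (x ^ N * exp (-(a 0 / 2) * (l * x ^ α))) := by
  obtain ⟨C, hC, hbound⟩ := (isBigO_sum_expNegCoeff a (half_pos ha) hδ N).exists_nonneg
  have hbound := eventually_principal.1 (eventually_prod_principal_iff.1 hbound.bound)
  refine ⟨C, hC, fun x hx l hl => ?_⟩
  have hx0 : 0 < x := hδ.trans_le hx
  exact abs_exp_neg_mul_mul_le hx0.le (hbound x hx (l * x ^ α) (by positivity : 0 ≤ l * x ^ α))

lemma exp_neg_mul_le_of_le {m y l : ℝ} (hm : m ≤ y) (hl : 1 ≤ l) :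
    exp (-l * y) ≤ exp (-m * l) * (exp m * exp (-y)) := by
  rw [← exp_add, ← exp_add, exp_le_exp]
  nlinarith

lemma exists_abs_exp_neg_mul_sub_laplaceModel_le (ha : 0 < a 0)
    (hφ : HasAsymptoticSeries (fun x => φ x / x ^ α) (PowerSeries.mk a) (𝓝[>] 0))
    (hpos : ∀ δ > 0, ∃ m > 0, ∀ x ≥ δ, m ≤ φ x) (N : ℕ) :
    ∃ C m : ℝ, 0 < m ∧ ∀ l : ℝ, 1 ≤ l → ∀ x : ℝ, 0 < x →
      |exp (-l * φ x) - laplaceModel α a N l x| ≤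
        C * (x ^ N * exp (-(a 0 / 2) * (l * x ^ α))) + exp (-m * l) * (exp m * exp (-φ x)) := by
  obtain ⟨C₁, δ, hC₁, hδ, near⟩ := exists_abs_sub_laplaceModel_le_near_zero ha hφ N
  obtain ⟨C₂, hC₂, far⟩ := exists_abs_laplaceModel_le α ha hδ N
  obtain ⟨m, hm, hφm⟩ := hpos δ hδ
  refine ⟨C₁ + C₂, m, hm, fun l hl x hx => ?_⟩
  have hl0 : 0 ≤ l := zero_le_one.trans hl
  rw [add_mul]
  have majorant_nonneg : 0 ≤ x ^ N * exp (-(a 0 / 2) * (l * x ^ α)) := by positivity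
  rcases lt_or_ge x δ with hxδ | hxδ
  · have tail_nonneg : 0 ≤ exp (-m * l) * (exp m * exp (-φ x)) := by positivity
    linarith [near x ⟨hx, hxδ⟩ l hl0, mul_nonneg hC₂ majorant_nonneg]
  · have triangle := abs_sub (exp (-l * φ x)) (laplaceModel α a N l x)
    rw [abs_exp] at triangle
    linarith [far x hxδ l hl0, exp_neg_mul_le_of_le (hφm x hxδ) hl,
      mul_nonneg hC₁ majorant_nonneg]

lemma integrable_exp_neg_mul {X : Type*} [MeasurableSpace X] {μ : Measure X} {f : X → ℝ}
    (hf : 0 ≤ᵐ[μ] f) (hint : Integrable (fun x => exp (-f x)) μ) {l : ℝ} (hl : 1 ≤ l) :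
    Integrable (fun x => exp (-l * f x)) μ := by
  have exp_eq_rpow (x : X) : exp (-l * f x) = exp (-f x) ^ l := by
    rw [← exp_mul]
    ring_nf
  refine hint.mono' ?_ ?_
  · simp only [exp_eq_rpow]
    exact (hint.aestronglyMeasurable.aemeasurable.pow_const l).aestronglyMeasurable
  · filter_upwards [hf] with x (hx : 0 ≤ f x)
    rw [norm_of_nonneg (exp_pos _).le, exp_le_exp]
    nlinarith

lemma exists_abs_integral_exp_neg_mul_sub_sum_le (hα : 0 < α) (ha : 0 < a 0)
    (hφ : HasAsymptoticSeries (fun x => φ x / x ^ α) (PowerSeries.mk a) (𝓝[>] 0))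
    (hpos : ∀ δ > 0, ∃ m > 0, ∀ x ≥ δ, m ≤ φ x)
    (hint : IntegrableOn (fun x => exp (-φ x)) (Set.Ioi 0)) (N : ℕ) :
    ∃ A B m : ℝ, 0 < m ∧ ∀ l : ℝ, 1 ≤ l →
      |(∫ x in Set.Ioi 0, exp (-l * φ x)) -
          ∑ n ∈ range N, laplaceMethodCoeff α a n * l ^ (-(((n : ℝ) + 1) / α))| ≤
        A * l ^ (-(((N : ℝ) + 1) / α)) + exp (-m * l) * B := by
  obtain ⟨C, m, hm, bound⟩ := exists_abs_exp_neg_mul_sub_laplaceModel_le ha hφ hpos N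
  have φ_nonneg : 0 ≤ᵐ[volume.restrict (Set.Ioi 0)] φ := by
    filter_upwards [ae_restrict_mem measurableSet_Ioi] with x hx
    obtain ⟨m, hm, hφm⟩ := hpos x hx
    exact hm.le.trans (hφm x le_rfl)
  refine ⟨C * (1 / α * (a 0 / 2) ^ (-(((N : ℝ) + 1) / α)) * Gamma ((N + 1) / α)),
    exp m * ∫ x in Set.Ioi 0, exp (-φ x), m, hm, fun l hl => ?_⟩
  have hl0 : 0 < l := zero_lt_one.trans_le hl
  have majorant_integrable := integrableOn_pow_mul_pow_mul_exp hα (half_pos ha) hl0 N 0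
  have majorant_integral := integral_pow_mul_pow_mul_exp hα (half_pos ha) hl0 N 0
  simp only [pow_zero, one_mul, Nat.cast_zero, add_zero] at majorant_integrable majorant_integral
  have majorant_integrable := majorant_integrable.const_mul C
  have tail_integrable := (hint.const_mul (exp m)).const_mul (exp (-m * l))
  rw [← integral_laplaceModel hα ha N hl0, ← integral_sub
    (integrable_exp_neg_mul φ_nonneg hint hl) (integrableOn_laplaceModel hα ha N hl0),
    ← norm_eq_abs]
  calc _ ≤ ∫ x in Set.Ioi 0, C * (x ^ N * exp (-(a 0 / 2) * (l * x ^ α))) +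
        exp (-m * l) * (exp m * exp (-φ x)) := by
        refine norm_integral_le_of_norm_le (majorant_integrable.add tail_integrable) ?_
        filter_upwards [ae_restrict_mem measurableSet_Ioi] with x hx using bound l hl x hx
    _ = _ := by
        rw [integral_add majorant_integrable tail_integrable]
        simp only [integral_const_mul, majorant_integral, mul_assoc]

theorem isBigO_integral_exp_neg_mul_sub_sum (hα : 0 < α) (ha : 0 < a 0)
    (hφ : HasAsymptoticSeries (fun x => φ x / x ^ α) (PowerSeries.mk a) (𝓝[>] 0))
    (hpos : ∀ δ > 0, ∃ m > 0, ∀ x ≥ δ, m ≤ φ x)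
    (hint : IntegrableOn (fun x => exp (-φ x)) (Set.Ioi 0)) (N : ℕ) :
    (fun l : ℝ => (∫ x in Set.Ioi 0, exp (-l * φ x)) -
        ∑ n ∈ range N, laplaceMethodCoeff α a n * l ^ (-(((n : ℝ) + 1) / α)))
      =O[atTop] fun l => l ^ (-(((N : ℝ) + 1) / α)) := by
  obtain ⟨A, B, m, hm, bound⟩ :=
    exists_abs_integral_exp_neg_mul_sub_sum_le hα ha hφ hpos hint N
  have tail : (fun l => exp (-m * l) * B) =O[atTop] fun l => l ^ (-(((N : ℝ) + 1) / α)) := by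
    simpa using (isLittleO_exp_neg_mul_rpow_atTop hm _).isBigO.mul (isBigO_const_one ℝ B atTop)
  refine IsBigO.trans (IsBigO.of_norm_eventuallyLE ?_)
    (((isBigO_refl _ _).const_mul_left A).add tail)
  filter_upwards [eventually_ge_atTop 1] with l hl using bound l hl

end LaplaceMethod

section Phase

lemma sum_range_neg_pow_succ_div {K : Type*} [Field K] (x : K) (N : ℕ) :
    ∑ i ∈ range (N + 1), (-x) ^ (i + 1) / ((i : K) + 1) =
      x ^ 2 * ∑ i ∈ range N, (-1) ^ i / ((i : K) + 2) * x ^ i - x := by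
  rw [sum_range_succ', mul_sum, sub_eq_add_neg]
  congr 1
  · refine sum_congr rfl fun i _ => ?_
    push_cast
    rw [neg_pow x, add_assoc (i : K), one_add_one_eq_two]
    ring
  · simp

lemma hasAsymptoticSeries_sub_log_div_sq :
    HasAsymptoticSeries (fun x => (x - log (1 + x)) / x ^ (2 : ℝ))
      (PowerSeries.mk fun m => (-1 : ℝ) ^ m / (m + 2)) (𝓝[>] 0) := by
  intro N
  refine IsBigO.of_bound 2 ?_
  filter_upwards [Ioo_mem_nhdsGT (one_half_pos (α := ℝ))] with x ⟨hx, hx2⟩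
  have abs_neg_lt : |-x| < 1 := by rw [abs_neg, abs_of_pos hx]; linarith
  have log_taylor := abs_log_sub_add_sum_range_le abs_neg_lt (N + 1)
  rw [sub_neg_eq_add, abs_neg, abs_of_pos hx] at log_taylor
  have quotient : (x - log (1 + x)) / x ^ (2 : ℝ) -
      ((PowerSeries.mk fun m => (-1 : ℝ) ^ m / (m + 2)).trunc N).eval x =
      -(∑ i ∈ range (N + 1), (-x) ^ (i + 1) / (i + 1) + log (1 + x)) / x ^ 2 := by
    simp only [eval_trunc_eq_sum_range, PowerSeries.coeff_mk, sum_range_neg_pow_succ_div, rpow_two]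
    field_simp
    ring
  rw [quotient, norm_div, norm_neg, norm_of_nonneg (sq_nonneg x), norm_of_nonneg (pow_pos hx N).le,
    div_le_iff₀ (by positivity)]
  refine log_taylor.trans ?_
  rw [div_le_iff₀ (by linarith)]
  nlinarith [pow_pos hx (N + 2), pow_add x N 2]

lemma exists_pos_le_sub_log {δ : ℝ} (hδ : 0 < δ) : ∃ m > 0, ∀ x ≥ δ, m ≤ x - log (1 + x) := by
  refine ⟨δ - log (1 + δ), ?_, fun x hx => ?_⟩
  · linarith [log_lt_sub_one_of_pos (by linarith : 0 < 1 + δ) (by linarith)]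
  · have ratio : (1 + x) / (1 + δ) - 1 ≤ x - δ := by
      rw [div_sub_one (by linarith), div_le_iff₀ (by linarith)]
      nlinarith
    have log_ratio :=
      log_le_sub_one_of_pos (div_pos (by linarith : 0 < 1 + x) (by linarith : 0 < 1 + δ))
    rw [log_div (by linarith) (by linarith)] at log_ratio
    linarith

lemma integrableOn_exp_neg_sub_log :
    IntegrableOn (fun x => exp (-(x - log (1 + x)))) (Set.Ioi 0) := by
  have pow_mul_exp (n : ℕ) : IntegrableOn (fun x : ℝ => x ^ n * exp (-x)) (Set.Ioi 0) := by
    simpa using integrableOn_pow_mul_pow_mul_exp one_pos one_pos one_pos n 0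
  refine ((pow_mul_exp 0).add (pow_mul_exp 1)).congr_fun
    (fun x (hx : 0 < x) => ?_) measurableSet_Ioi
  rw [neg_sub, sub_eq_add_neg, exp_add, exp_log (by positivity)]
  simp [add_mul]

lemma Gamma_mul_laplaceCoeff (n : ℕ) :
    Gamma (((n : ℝ) + 1) / 2) * laplaceCoeff n =
      laplaceMethodCoeff 2 (fun m => (-1 : ℝ) ^ m / ((m : ℝ) + 2)) n := by
  have hΓ : Gamma (((n : ℝ) + 1) / 2) ≠ 0 := (Gamma_pos_of_pos (by positivity)).ne'
  have half_rpow_neg (r : ℝ) : ((1 : ℝ) / 2) ^ (-r) = 2 ^ r := by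
    rw [one_div, inv_rpow two_pos.le, rpow_neg two_pos.le, inv_inv]
  rw [laplaceCoeff, laplaceMethodCoeff, ← mul_assoc]
  congr 1
  · field_simp
  · refine sum_congr rfl fun k _ => ?_
    rw [pow_zero, Nat.cast_zero, zero_add, half_rpow_neg]
    ring

end Phase

/-- Asymptotic expansion of `∫_0^∞ e^{-λ(x - log(1+x))} dx` as `λ → +∞`:
for every `N`, the integral equals `∑_{n=0}^{N-1} Γ((n+1)/2) c_n λ^{-(n+1)/2}`
up to an error `O(λ^{-(N+1)/2})`. -/
theorem laplace_integral_expansion (N : ℕ) :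
    (fun l : ℝ =>
        (∫ x in Set.Ioi (0 : ℝ), Real.exp (-l * (x - Real.log (1 + x)))) -
          ∑ n ∈ Finset.range N,
            Real.Gamma (((n : ℝ) + 1) / 2) * laplaceCoeff n * l ^ (-(((n : ℝ) + 1) / 2)))
      =O[atTop] fun l : ℝ => l ^ (-(((N : ℝ) + 1) / 2)) := by
  simp only [Gamma_mul_laplaceCoeff]
  exact isBigO_integral_exp_neg_mul_sub_sum two_pos (by norm_num)
    hasAsymptoticSeries_sub_log_div_sq (fun _ => exists_pos_le_sub_log)
    integrableOn_exp_neg_sub_log N
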